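/- arXiv:2211.16652 — 2 statements merged into one kernel-verified Lean document; each statement's English description precedes it below -/
import Mathlib

section
/- Let (α, β) belong to one of the eight open regions G_1, …, G_8. Then there exists ε_0 > 0 such that for every ε ∈ (0, ε_0) the stationary boundary value problem has exactly one solution; that is, there is exactly one twice continuously differentiable ρ : [0,1] → ℝ such that, with j(x) := −ε ρ'(x) + ρ(x)(1 − ρ(x)), the function x ↦ k(x) j(x) has zero derivative on [0,1], j(0) = α(1 − ρ(0)), and j(1) = β ρ(1). -/
open Set

/-- The total flux `j(x) = -ε ρ'(x) + ρ(x)(1-ρ(x))` of a density profile `ρ` on `[0,1]`. -/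
noncomputable def flux (ε : ℝ) (ρ : ℝ → ℝ) (x : ℝ) : ℝ :=
  -ε * derivWithin ρ (Icc (0:ℝ) 1) x + ρ x * (1 - ρ x)

/-- `ρ` is a (twice continuously differentiable) solution of the stationary boundary value
problem: `(k j)' = 0` on `[0,1]`, `j(0) = α(1-ρ(0))`, `j(1) = β ρ(1)`. -/
def IsStatSol (k : ℝ → ℝ) (ε α β : ℝ) (ρ : ℝ → ℝ) : Prop :=
  ContDiffOn ℝ 2 ρ (Icc (0:ℝ) 1) ∧
  (∀ x ∈ Icc (0:ℝ) 1, derivWithin (fun y => k y * flux ε ρ y) (Icc (0:ℝ) 1) x = 0) ∧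
  flux ε ρ 0 = α * (1 - ρ 0) ∧
  flux ε ρ 1 = β * ρ 1

/-- `ρ_c^0 = (1/2)(1 - √(1 - k(ξ*)/k(0)))`. -/
noncomputable def rhoC0 (k : ℝ → ℝ) (ξs : ℝ) : ℝ :=
  1/2 * (1 - Real.sqrt (1 - k ξs / k 0))

/-- `ρ_c^1 = (1/2)(1 + √(1 - k(ξ*)/k(1)))`. -/
noncomputable def rhoC1 (k : ℝ → ℝ) (ξs : ℝ) : ℝ :=
  1/2 * (1 + Real.sqrt (1 - k ξs / k 1))

/-- `ρ*(α) = (1/2)(1 - √(1 - 4α(1-α)k(0)/k(1)))`. -/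
noncomputable def rhoStar (k : ℝ → ℝ) (α : ℝ) : ℝ :=
  1/2 * (1 - Real.sqrt (1 - 4*α*(1-α) * k 0 / k 1))

/-- `ρ_*(β) = (1/2)(1 + √(1 - 4β(1-β)k(1)/k(0)))`. -/
noncomputable def rhoLowStar (k : ℝ → ℝ) (β : ℝ) : ℝ :=
  1/2 * (1 + Real.sqrt (1 - 4*β*(1-β) * k 1 / k 0))

/-! The flux through a solution is `J / k` for a constant `J`, so the problem is the first-order
equation `ε ρ' = ρ (1 - ρ) - J / k` with one boundary condition at each end. Lowering `J` raises
the profile, while the right boundary condition ties `J` to `β ρ 1`; two solutions with different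
`J` would contradict each other there. For existence, shoot from the left: the profile starting at
`1 - J / (α k 0)` overshoots the condition `ρ 1 = J / (β k 1)` at `J = 0` and undershoots it at
`J = α k 0`. Replacing `ρ (1 - ρ)` by its positive part makes the shooting map globally defined,
and the profile that meets the boundary condition never leaves `[0, 1]`. -/

section OrdinaryDifferentialEquations

open scoped NNReal

lemma hasDerivWithinAt_Ici_of_Icc {E : Type*} [NormedAddCommGroup E] [NormedSpace ℝ E]
    {f : ℝ → E} {f' : E} {a b x : ℝ} (h : HasDerivWithinAt f f' (Icc a b) x)
    (hx : x ∈ Ico a b) : HasDerivWithinAt f f' (Ici x) x :=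
  h.mono_of_mem_nhdsWithin (Icc_mem_nhdsGE_of_mem hx)

/- Unlike in Grönwall's inequality, the bound on `w'` is only needed where `w` is positive: before
its first crossing `w` stays below `δ * exp ((K + 1) * (x - a))`, and `δ` is arbitrary. -/
lemma nonpos_of_deriv_right_le_mul {w w' : ℝ → ℝ} {a b K x : ℝ} (hw : ContinuousOn w (Icc a b))
    (hw' : ∀ y ∈ Ico a b, HasDerivWithinAt w (w' y) (Ici y) y) (ha : w a ≤ 0)
    (hle : ∀ y ∈ Ico a b, 0 < w y → w' y ≤ K * w y) (hx : x ∈ Icc a b) : w x ≤ 0 := by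
  have le_exp : ∀ δ > 0, w x ≤ δ * Real.exp ((K + 1) * (x - a)) := by
    intro δ hδ
    have hB (y : ℝ) : HasDerivAt (fun y ↦ δ * Real.exp ((K + 1) * (y - a)))
        ((K + 1) * (δ * Real.exp ((K + 1) * (y - a)))) y :=
      (((((hasDerivAt_id' y).sub_const a).const_mul (K + 1)).exp).const_mul δ).congr_deriv
        (by ring)
    refine image_le_of_deriv_right_lt_deriv_boundary' hw hw' ?_
      (HasDerivAt.continuousOn fun y _ ↦ hB y) (fun y _ ↦ (hB y).hasDerivWithinAt) ?_ hx
    · simpa using ha.trans hδ.le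
    · intro y hy hwy
      have hpos : 0 < w y := by rw [hwy]; positivity
      rw [← hwy]
      linarith [hle y hy hpos]
  refine le_of_forall_pos_le_add fun η hη ↦ ?_
  have hexp := Real.exp_pos ((K + 1) * (x - a))
  simpa [hexp.ne'] using le_exp (η / Real.exp ((K + 1) * (x - a))) (by positivity)

lemma exists_hasDerivWithinAt_Icc_of_lipschitzWith_of_norm_le {E : Type*} [NormedAddCommGroup E]
    [NormedSpace ℝ E] [CompleteSpace E] {v : ℝ → E → E} {a b : ℝ} {K L : ℝ≥0} (hab : a ≤ b)
    (hlip : ∀ t ∈ Icc a b, LipschitzWith K (v t))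
    (hcont : ∀ x, ContinuousOn (v · x) (Icc a b))
    (hbound : ∀ t ∈ Icc a b, ∀ x, ‖v t x‖ ≤ L) (x₀ : E) :
    ∃ u : ℝ → E, u a = x₀ ∧ ∀ t ∈ Icc a b, HasDerivWithinAt u (v t (u t)) (Icc a b) t := by
  have hP : IsPicardLindelof v (⟨a, left_mem_Icc.2 hab⟩ : Icc a b) x₀
      (L * (b - a).toNNReal) 0 L K :=
    { lipschitzOnWith t ht := (hlip t ht).lipschitzOnWith
      continuousOn x _ := hcont x
      norm_le t ht x _ := hbound t ht x
      mul_max_le := by simp [hab] }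
  exact hP.exists_eq_forall_mem_Icc_hasDerivWithinAt₀

lemma continuous_gronwallBound (K x : ℝ) :
    Continuous fun p : ℝ × ℝ ↦ gronwallBound p.1 K p.2 x := by
  unfold gronwallBound
  split_ifs <;> fun_prop

lemma continuous_eval_of_lipschitz_parameter {P E : Type*} [PseudoMetricSpace P]
    [NormedAddCommGroup E] [NormedSpace ℝ E] {v : P → ℝ → E → E} {u : P → ℝ → E}
    {a b t : ℝ} {K C : ℝ≥0}
    (hlip : ∀ p, ∀ s ∈ Icc a b, LipschitzWith K (v p s))
    (hparam : ∀ s ∈ Icc a b, ∀ x, LipschitzWith C fun p ↦ v p s x)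
    (hu : ∀ p, ∀ s ∈ Icc a b, HasDerivWithinAt (u p) (v p s (u p s)) (Icc a b) s)
    (hinit : Continuous fun p ↦ u p a) (ht : t ∈ Icc a b) : Continuous fun p ↦ u p t := by
  refine continuous_iff_continuousAt.2 fun q ↦ ?_
  have dist_le (p : P) : dist (u p t) (u q t) ≤
      gronwallBound (dist (u p a) (u q a)) K (C * dist p q + 0) (t - a) :=
    dist_le_of_approx_trajectories_ODE_of_mem
      (v := v q) (s := fun _ ↦ univ)
      (fun s hs ↦ (hlip q s (Ico_subset_Icc_self hs)).lipschitzOnWith)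
      (HasDerivWithinAt.continuousOn (hu p))
      (fun s hs ↦ hasDerivWithinAt_Ici_of_Icc (hu p s (Ico_subset_Icc_self hs)) hs)
      (fun s hs ↦ (hparam s (Ico_subset_Icc_self hs) _).dist_le_mul p q) (fun _ _ ↦ mem_univ _)
      (HasDerivWithinAt.continuousOn (hu q))
      (fun s hs ↦ hasDerivWithinAt_Ici_of_Icc (hu q s (Ico_subset_Icc_self hs)) hs)
      (fun s _ ↦ (dist_self _).le) (fun _ _ ↦ mem_univ _) le_rfl t ht
  have hbound : Continuous fun p ↦
      gronwallBound (dist (u p a) (u q a)) K (C * dist p q + 0) (t - a) :=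
    (continuous_gronwallBound K (t - a)).comp
      (f := fun p ↦ (dist (u p a) (u q a), C * dist p q + 0)) (by fun_prop)
  refine tendsto_iff_dist_tendsto_zero.2 (squeeze_zero (fun _ ↦ dist_nonneg) dist_le ?_)
  simpa [gronwallBound_ε0_δ0] using hbound.tendsto q

end OrdinaryDifferentialEquations

/-- The current `p ↦ p (1 - p)` of the exclusion process at density `p`. -/
def logistic (p : ℝ) : ℝ := p * (1 - p)

/-- The positive part of `logistic`. It is bounded and globally Lipschitz, so that profiles driven
by it exist on all of `[0,1]`, and it agrees with `logistic` on `[0,1]`. -/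
noncomputable def truncatedLogistic (p : ℝ) : ℝ := max (logistic p) 0

lemma truncatedLogistic_nonneg (p : ℝ) : 0 ≤ truncatedLogistic p := le_max_right _ _

lemma truncatedLogistic_of_mem_Icc {p : ℝ} (hp : p ∈ Icc (0 : ℝ) 1) :
    truncatedLogistic p = logistic p :=
  max_eq_left (mul_nonneg hp.1 (sub_nonneg.2 hp.2))

lemma truncatedLogistic_of_nonpos {p : ℝ} (hp : p ≤ 0) : truncatedLogistic p = 0 :=
  max_eq_right (mul_nonpos_of_nonpos_of_nonneg hp (by linarith))

lemma truncatedLogistic_of_one_le {p : ℝ} (hp : 1 ≤ p) : truncatedLogistic p = 0 :=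
  max_eq_right (mul_nonpos_of_nonneg_of_nonpos (by linarith) (by linarith))

lemma truncatedLogistic_le_posPart (p : ℝ) : truncatedLogistic p ≤ max p 0 :=
  max_le_max_right 0 (by unfold logistic; nlinarith [sq_nonneg p])

lemma truncatedLogistic_le_one (p : ℝ) : truncatedLogistic p ≤ 1 :=
  max_le (by unfold logistic; nlinarith [sq_nonneg (p - 1 / 2)]) zero_le_one

lemma truncatedLogistic_eq_logistic_projIcc (p : ℝ) :
    truncatedLogistic p = logistic (projIcc 0 1 zero_le_one p) := by
  rcases le_total p 0 with hp0 | hp0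
  · rw [projIcc_of_le_left _ hp0, truncatedLogistic_of_nonpos hp0]
    simp [logistic]
  rcases le_total p 1 with hp1 | hp1
  · rw [projIcc_of_mem _ ⟨hp0, hp1⟩, truncatedLogistic_of_mem_Icc ⟨hp0, hp1⟩]
  · rw [projIcc_of_right_le _ hp1, truncatedLogistic_of_one_le hp1]
    simp [logistic]

lemma lipschitzOnWith_logistic : LipschitzOnWith 1 logistic (Icc 0 1) := by
  refine LipschitzOnWith.of_dist_le_mul fun p hp q hq ↦ ?_
  have hslope : |1 - (p + q)| ≤ 1 := abs_le.2 ⟨by linarith [hp.2, hq.2], by linarith [hp.1, hq.1]⟩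
  calc dist (logistic p) (logistic q)
      = |1 - (p + q)| * dist p q := by
        rw [Real.dist_eq, Real.dist_eq, ← abs_mul]
        unfold logistic
        ring_nf
    _ ≤ 1 * dist p q := by gcongr

lemma lipschitzWith_truncatedLogistic : LipschitzWith 1 truncatedLogistic := by
  have h := (lipschitzOnWith_iff_restrict.1 lipschitzOnWith_logistic).comp
    (LipschitzWith.projIcc (zero_le_one (α := ℝ)))
  rw [one_mul] at h
  exact (funext truncatedLogistic_eq_logistic_projIcc : truncatedLogistic = _) ▸ h

/-- `ρ` solves `ε ρ' = G(ρ) - J / k` on `[0,1]`. With `G = logistic` this is the stationary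
equation integrated once, `J` being the constant value of `k j`. -/
def IsFluxSol (G k : ℝ → ℝ) (ε J : ℝ) (ρ : ℝ → ℝ) : Prop :=
  ∀ x ∈ Icc (0 : ℝ) 1, HasDerivWithinAt ρ ((G (ρ x) - J / k x) / ε) (Icc 0 1) x

/-- The boundary conditions `j(0) = α (1 - ρ(0))` and `j(1) = β ρ(1)` for the flux `j = J / k`. -/
def HasBoundaryFlux (k : ℝ → ℝ) (α β J : ℝ) (ρ : ℝ → ℝ) : Prop :=
  J / k 0 = α * (1 - ρ 0) ∧ J / k 1 = β * ρ 1

namespace IsFluxSol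

variable {G k ρ : ℝ → ℝ} {ε J : ℝ}

protected lemma continuousOn (h : IsFluxSol G k ε J ρ) : ContinuousOn ρ (Icc 0 1) :=
  HasDerivWithinAt.continuousOn h

lemma hasDerivWithinAt_Ici (h : IsFluxSol G k ε J ρ) {x : ℝ} (hx : x ∈ Ico (0 : ℝ) 1) :
    HasDerivWithinAt ρ ((G (ρ x) - J / k x) / ε) (Ici x) x :=
  hasDerivWithinAt_Ici_of_Icc (h x (Ico_subset_Icc_self hx)) hx

lemma congr_drift {G' : ℝ → ℝ} (h : IsFluxSol G k ε J ρ)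
    (hG : ∀ x ∈ Icc (0 : ℝ) 1, G (ρ x) = G' (ρ x)) : IsFluxSol G' k ε J ρ :=
  fun x hx ↦ hG x hx ▸ h x hx

lemma contDiffOn_two (h : IsFluxSol G k ε J ρ) (hG : ContDiff ℝ 1 G)
    (hk : ContDiffOn ℝ 1 k (Icc 0 1)) (hk0 : ∀ x ∈ Icc (0 : ℝ) 1, k x ≠ 0) :
    ContDiffOn ℝ 2 ρ (Icc 0 1) := by
  have hu : UniqueDiffOn ℝ (Icc (0 : ℝ) 1) := uniqueDiffOn_Icc one_pos
  have bootstrap (n : ℕ) (hn : n ≤ 1) (hρ : ContDiffOn ℝ n ρ (Icc 0 1)) :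
      ContDiffOn ℝ (n + 1) ρ (Icc 0 1) := by
    have hn' : (n : WithTop ℕ∞) ≤ 1 := mod_cast hn
    refine (contDiffOn_succ_iff_derivWithin hu).2
      ⟨fun x hx ↦ (h x hx).differentiableWithinAt, by simp, ?_⟩
    refine ContDiffOn.congr ?_ fun x hx ↦ (h x hx).derivWithin (hu x hx)
    exact (((hG.of_le hn').comp_contDiffOn hρ).sub
      (contDiffOn_const.div (hk.of_le hn') hk0)).div_const ε
  have h0 : ContDiffOn ℝ (0 : ℕ) ρ (Icc 0 1) := by simpa using h.continuousOn
  have h1 : ContDiffOn ℝ (1 : ℕ) ρ (Icc 0 1) := by simpa using bootstrap 0 zero_le_one h0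
  simpa [one_add_one_eq_two] using bootstrap 1 le_rfl h1

end IsFluxSol

section Flux

variable {k ρ : ℝ → ℝ} {ε J : ℝ}

lemma isFluxSol_logistic_iff_flux_eq (hε : ε ≠ 0) :
    IsFluxSol logistic k ε J ρ ↔
      DifferentiableOn ℝ ρ (Icc 0 1) ∧ ∀ x ∈ Icc (0 : ℝ) 1, flux ε ρ x = J / k x := by
  have flux_eq_iff (x : ℝ) : flux ε ρ x = J / k x ↔
      derivWithin ρ (Icc 0 1) x = (logistic (ρ x) - J / k x) / ε := by
    rw [eq_div_iff hε, flux, logistic]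
    constructor <;> intro h <;> linarith
  simp only [flux_eq_iff]
  constructor
  · exact fun h ↦ ⟨fun x hx ↦ (h x hx).differentiableWithinAt,
      fun x hx ↦ (h x hx).derivWithin (uniqueDiffOn_Icc one_pos x hx)⟩
  · exact fun ⟨hd, heq⟩ x hx ↦ heq x hx ▸ (hd x hx).hasDerivWithinAt

lemma differentiableOn_flux (hρ : ContDiffOn ℝ 2 ρ (Icc 0 1)) :
    DifferentiableOn ℝ (flux ε ρ) (Icc 0 1) := by
  have hρ' : DifferentiableOn ℝ (derivWithin ρ (Icc 0 1)) (Icc 0 1) :=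
    (hρ.derivWithin (uniqueDiffOn_Icc one_pos) (m := 1) (by norm_num)).differentiableOn
      one_ne_zero
  have hρd := hρ.differentiableOn two_ne_zero
  unfold flux
  fun_prop

theorem isStatSol_iff_exists_isFluxSol {α β : ℝ} (hk : ContDiffOn ℝ 1 k (Icc 0 1))
    (hk0 : ∀ x ∈ Icc (0 : ℝ) 1, k x ≠ 0) (hε : ε ≠ 0) :
    IsStatSol k ε α β ρ ↔
      ∃ J, IsFluxSol logistic k ε J ρ ∧ HasBoundaryFlux k α β J ρ := by
  have h0 : (0 : ℝ) ∈ Icc (0 : ℝ) 1 := by simp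
  have h1 : (1 : ℝ) ∈ Icc (0 : ℝ) 1 := by simp
  constructor
  · rintro ⟨hρ, hd, hl, hr⟩
    have hconst := constant_of_derivWithin_zero
      ((hk.differentiableOn one_ne_zero).mul (differentiableOn_flux hρ))
      fun x hx ↦ hd x (Ico_subset_Icc_self hx)
    have hflux : ∀ x ∈ Icc (0 : ℝ) 1, flux ε ρ x = k 0 * flux ε ρ 0 / k x := fun x hx ↦
      eq_div_of_mul_eq (hk0 x hx) ((mul_comm _ _).trans (hconst x hx))
    exact ⟨k 0 * flux ε ρ 0,
      (isFluxSol_logistic_iff_flux_eq hε).2 ⟨hρ.differentiableOn two_ne_zero, hflux⟩,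
      (hflux 0 h0).symm.trans hl, (hflux 1 h1).symm.trans hr⟩
  · rintro ⟨J, hρ, hl, hr⟩
    have hflux := ((isFluxSol_logistic_iff_flux_eq hε).1 hρ).2
    have hconst : EqOn (fun y ↦ k y * flux ε ρ y) (fun _ ↦ J) (Icc 0 1) := fun y hy ↦ by
      simp only [hflux y hy, mul_div_cancel₀ J (hk0 y hy)]
    have hlogistic : ContDiff ℝ 1 logistic := by unfold logistic; fun_prop
    exact ⟨hρ.contDiffOn_two hlogistic hk hk0,
      fun x hx ↦ by rw [derivWithin_congr hconst (hconst hx), derivWithin_fun_const]; rfl,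
      (hflux 0 h0).trans hl, (hflux 1 h1).trans hr⟩

end Flux

section Comparison

variable {k ρ σ : ℝ → ℝ} {ε J₁ J₂ : ℝ}

theorem IsFluxSol.le_of_flux_le (hρ : IsFluxSol logistic k ε J₁ ρ)
    (hσ : IsFluxSol logistic k ε J₂ σ) (hk : ∀ x ∈ Icc (0 : ℝ) 1, 0 < k x) (hε : 0 < ε)
    (hJ : J₁ ≤ J₂) (hinit : σ 0 ≤ ρ 0) {x : ℝ} (hx : x ∈ Icc (0 : ℝ) 1) : σ x ≤ ρ x := by
  obtain ⟨M, hM⟩ := isCompact_Icc.exists_bound_of_continuousOn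
    ((continuousOn_const (c := (1 : ℝ))).sub (hσ.continuousOn.add hρ.continuousOn))
  refine sub_nonpos.1 <| nonpos_of_deriv_right_le_mul (w := fun y ↦ σ y - ρ y) (K := M / ε)
    (hσ.continuousOn.sub hρ.continuousOn)
    (fun y hy ↦ (hσ.hasDerivWithinAt_Ici hy).sub (hρ.hasDerivWithinAt_Ici hy))
    (sub_nonpos.2 hinit) (fun y hy hpos ↦ ?_) hx
  have hky := hk y (Ico_subset_Icc_self hy)
  have hflux : J₁ / k y ≤ J₂ / k y := by gcongr
  have hslope : 1 - (σ y + ρ y) ≤ M := (le_abs_self _).trans (hM y (Ico_subset_Icc_self hy))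
  rw [← sub_div, div_mul_eq_mul_div]
  gcongr
  calc logistic (σ y) - J₂ / k y - (logistic (ρ y) - J₁ / k y)
      ≤ logistic (σ y) - logistic (ρ y) := by linarith
    _ = (1 - (σ y + ρ y)) * (σ y - ρ y) := by unfold logistic; ring
    _ ≤ M * (σ y - ρ y) := by gcongr

theorem IsFluxSol.eqOn_of_hasBoundaryFlux {α β : ℝ} (hk : ∀ x ∈ Icc (0 : ℝ) 1, 0 < k x) (hε : 0 < ε)
    (hα : 0 < α) (hβ : 0 < β)
    (hρ : IsFluxSol logistic k ε J₁ ρ) (hρb : HasBoundaryFlux k α β J₁ ρ)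
    (hσ : IsFluxSol logistic k ε J₂ σ) (hσb : HasBoundaryFlux k α β J₂ σ) :
    EqOn ρ σ (Icc 0 1) := by
  wlog hJ : J₁ ≤ J₂ generalizing J₁ J₂ ρ σ
  · exact (this hσ hσb hρ hρb (le_of_not_ge hJ)).symm
  obtain ⟨hρ0, hρ1⟩ := hρb
  obtain ⟨hσ0, hσ1⟩ := hσb
  have hk0 := hk 0 (by simp)
  have hk1 := hk 1 (by simp)
  have init_le : σ 0 ≤ ρ 0 := by
    have hflux : J₁ / k 0 ≤ J₂ / k 0 := by gcongr
    rw [hρ0, hσ0, mul_le_mul_iff_right₀ hα] at hflux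
    linarith
  have hle : ∀ x ∈ Icc (0 : ℝ) 1, σ x ≤ ρ x := fun x hx ↦ hρ.le_of_flux_le hσ hk hε hJ init_le hx
  have hJ_eq : J₁ = J₂ := by
    have hflux : J₂ / k 1 ≤ J₁ / k 1 := by
      rw [hρ1, hσ1]
      gcongr
      exact hle 1 (by simp)
    exact hJ.antisymm ((div_le_div_iff_of_pos_right hk1).1 hflux)
  have init_eq : ρ 0 = σ 0 := by
    subst hJ_eq
    have := mul_left_cancel₀ hα.ne' (hρ0.symm.trans hσ0)
    linarith
  exact fun x hx ↦
    (hσ.le_of_flux_le hρ hk hε hJ_eq.ge init_eq.le hx).antisymm (hle x hx)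

end Comparison

section Shooting

variable {k ρ : ℝ → ℝ} {ε J : ℝ}

lemma IsFluxSol.le_one_of_truncated (h : IsFluxSol truncatedLogistic k ε J ρ)
    (hk : ∀ x ∈ Icc (0 : ℝ) 1, 0 < k x) (hε : 0 < ε) (hJ : 0 ≤ J) (h0 : ρ 0 ≤ 1) {x : ℝ}
    (hx : x ∈ Icc (0 : ℝ) 1) : ρ x ≤ 1 := by
  refine sub_nonpos.1 <| nonpos_of_deriv_right_le_mul (w := fun y ↦ ρ y - 1) (K := 0)
    (h.continuousOn.sub continuousOn_const) (fun y hy ↦ (h.hasDerivWithinAt_Ici hy).sub_const 1)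
    (sub_nonpos.2 h0) (fun y hy hpos ↦ ?_) hx
  have hky := hk y (Ico_subset_Icc_self hy)
  have hflux : 0 ≤ J / k y / ε := by positivity
  rw [truncatedLogistic_of_one_le (sub_pos.1 hpos).le, zero_sub, neg_div, zero_mul]
  exact neg_nonpos.2 hflux

lemma IsFluxSol.le_of_truncated_of_nonpos (h : IsFluxSol truncatedLogistic k ε J ρ)
    (hk : ∀ x ∈ Icc (0 : ℝ) 1, 0 < k x) (hε : 0 < ε) (hJ : 0 ≤ J) {x y : ℝ}
    (hx : 0 ≤ x) (hρx : ρ x ≤ 0) (hxy : x ≤ y) (hy : y ≤ 1) : ρ y ≤ ρ x := by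
  have hsub : Icc x 1 ⊆ Icc (0 : ℝ) 1 := Icc_subset_Icc_left hx
  refine sub_nonpos.1 <| nonpos_of_deriv_right_le_mul (w := fun z ↦ ρ z - ρ x) (K := 1 / ε)
    ((h.continuousOn.mono hsub).sub continuousOn_const)
    (fun z hz ↦ (h.hasDerivWithinAt_Ici ⟨hx.trans hz.1, hz.2⟩).sub_const (ρ x))
    (sub_self _).le (fun z hz hpos ↦ ?_) ⟨hxy, hy⟩
  have hkz := hk z (hsub (Ico_subset_Icc_self hz))
  have hflux : 0 ≤ J / k z := by positivity
  have hdrift : truncatedLogistic (ρ z) ≤ ρ z - ρ x :=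
    (truncatedLogistic_le_posPart _).trans (max_le (by linarith) hpos.le)
  rw [one_div_mul_eq_div]
  exact div_le_div_of_nonneg_right (by linarith) hε.le

lemma IsFluxSol.init_le_of_truncated_zero (h : IsFluxSol truncatedLogistic k ε 0 ρ)
    (hε : 0 < ε) {x : ℝ} (hx : x ∈ Icc (0 : ℝ) 1) : ρ 0 ≤ ρ x := by
  refine sub_nonpos.1 <| nonpos_of_deriv_right_le_mul (w := fun y ↦ ρ 0 - ρ y) (K := 0)
    (continuousOn_const.sub h.continuousOn)
    (fun y hy ↦ (h.hasDerivWithinAt_Ici hy).const_sub (ρ 0))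
    (sub_self _).le (fun y _ _ ↦ ?_) hx
  rw [zero_div, sub_zero, zero_mul]
  exact neg_nonpos.2 (div_nonneg (truncatedLogistic_nonneg _) hε.le)

open scoped NNReal

variable {G : ℝ → ℝ} {K : ℝ≥0}

lemma lipschitzWith_sub_const_div (hG : LipschitzWith K G) (c ε : ℝ) :
    LipschitzWith (K / ‖ε‖₊) fun p ↦ (G p - c) / ε := by
  refine LipschitzWith.of_dist_le_mul fun p q ↦ ?_
  have hsub : (G p - c) / ε - (G q - c) / ε = (G p - G q) / ε := by ring
  rw [dist_eq_norm, hsub, norm_div, ← dist_eq_norm, NNReal.coe_div, coe_nnnorm,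
    div_mul_eq_mul_div]
  gcongr
  exact hG.dist_le_mul p q

lemma exists_isFluxSol {M : ℝ} (hG : LipschitzWith K G) (hGM : ∀ p, ‖G p‖ ≤ M)
    (hk : ContinuousOn k (Icc 0 1)) (hk0 : ∀ x ∈ Icc (0 : ℝ) 1, k x ≠ 0) (ε J ρ₀ : ℝ) :
    ∃ ρ, ρ 0 = ρ₀ ∧ IsFluxSol G k ε J ρ := by
  have hflux : ContinuousOn (fun x ↦ J / k x) (Icc 0 1) := continuousOn_const.div hk hk0
  obtain ⟨C, hC⟩ := isCompact_Icc.exists_bound_of_continuousOn hflux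
  refine exists_hasDerivWithinAt_Icc_of_lipschitzWith_of_norm_le
    (v := fun x p ↦ (G p - J / k x) / ε) (L := ((M + C) / ‖ε‖).toNNReal) zero_le_one
    (fun x _ ↦ lipschitzWith_sub_const_div hG (J / k x) ε)
    (fun p ↦ (continuousOn_const.sub hflux).div_const ε) (fun x hx p ↦ ?_) ρ₀
  refine le_trans ?_ (Real.le_coe_toNNReal _)
  rw [norm_div]
  gcongr
  exact (norm_sub_le _ _).trans (add_le_add (hGM p) (hC x hx))

lemma continuous_eval_of_isFluxSol {R : ℝ → ℝ → ℝ} (hG : LipschitzWith K G)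
    (hk : ContinuousOn k (Icc 0 1)) (hk0 : ∀ x ∈ Icc (0 : ℝ) 1, k x ≠ 0)
    (hR : ∀ J, IsFluxSol G k ε J (R J)) (hinit : Continuous fun J ↦ R J 0) {x : ℝ}
    (hx : x ∈ Icc (0 : ℝ) 1) : Continuous fun J ↦ R J x := by
  obtain ⟨C, hC⟩ := isCompact_Icc.exists_bound_of_continuousOn ((hk.inv₀ hk0).div_const ε)
  refine continuous_eval_of_lipschitz_parameter (C := C.toNNReal)
    (fun J y _ ↦ lipschitzWith_sub_const_div hG (J / k y) ε) (fun y hy p ↦ ?_) hR hinit hx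
  refine LipschitzWith.of_dist_le_mul fun J₁ J₂ ↦ ?_
  calc dist ((G p - J₁ / k y) / ε) ((G p - J₂ / k y) / ε)
      = ‖(k y)⁻¹ / ε‖ * dist J₁ J₂ := by
        rw [dist_comm J₁, Real.dist_eq, Real.dist_eq, Real.norm_eq_abs, ← abs_mul]
        congr 1
        ring
    _ ≤ C.toNNReal * dist J₁ J₂ := by
        gcongr
        exact (hC y hy).trans (Real.le_coe_toNNReal C)

theorem exists_truncated_isFluxSol_hasBoundaryFlux {α β : ℝ} (hk : ContinuousOn k (Icc 0 1))
    (hkpos : ∀ x ∈ Icc (0 : ℝ) 1, 0 < k x) (hε : 0 < ε) (hα : 0 < α) (hβ : 0 < β) :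
    ∃ J ≥ 0, ∃ ρ, IsFluxSol truncatedLogistic k ε J ρ ∧ HasBoundaryFlux k α β J ρ := by
  have hk0 : ∀ x ∈ Icc (0 : ℝ) 1, k x ≠ 0 := fun x hx ↦ (hkpos x hx).ne'
  have hαk : 0 < α * k 0 := mul_pos hα (hkpos 0 (by simp))
  have hβk : 0 < β * k 1 := mul_pos hβ (hkpos 1 (by simp))
  have hbound (p : ℝ) : ‖truncatedLogistic p‖ ≤ 1 := by
    simpa [abs_of_nonneg (truncatedLogistic_nonneg p)] using truncatedLogistic_le_one p
  choose R hR0 hR using fun J ↦ exists_isFluxSol lipschitzWith_truncatedLogistic hbound hk hk0 ε J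
    (1 - J / (α * k 0))
  have hcont : Continuous fun J ↦ R J 1 - J / (β * k 1) := by
    have := continuous_eval_of_isFluxSol lipschitzWith_truncatedLogistic hk hk0 hR
      (by simp only [hR0]; fun_prop) (x := 1) (by simp)
    fun_prop
  have overshoot : 0 ≤ R 0 1 - 0 / (β * k 1) := by
    have := (hR 0).init_le_of_truncated_zero hε (x := 1) (by simp)
    simp only [hR0, zero_div, sub_zero] at this ⊢
    linarith
  have undershoot : R (α * k 0) 1 - α * k 0 / (β * k 1) ≤ 0 := by
    have h0 : R (α * k 0) 0 = 0 := by rw [hR0, div_self hαk.ne', sub_self]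
    have := (hR (α * k 0)).le_of_truncated_of_nonpos hkpos hε hαk.le le_rfl h0.le zero_le_one le_rfl
    have : 0 < α * k 0 / (β * k 1) := by positivity
    linarith
  obtain ⟨J, hJ, hroot⟩ := intermediate_value_Icc' hαk.le hcont.continuousOn ⟨undershoot, overshoot⟩
  refine ⟨J, hJ.1, R J, hR J, ?_, ?_⟩
  · rw [hR0]
    field_simp
    ring
  · rw [sub_eq_zero.1 hroot]
    field_simp

theorem exists_isFluxSol_hasBoundaryFlux {α β : ℝ} (hk : ContinuousOn k (Icc 0 1))
    (hkpos : ∀ x ∈ Icc (0 : ℝ) 1, 0 < k x) (hε : 0 < ε) (hα : 0 < α) (hβ : 0 < β) :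
    ∃ J ρ, IsFluxSol logistic k ε J ρ ∧ HasBoundaryFlux k α β J ρ := by
  obtain ⟨J, hJ, ρ, hρ, hb⟩ := exists_truncated_isFluxSol_hasBoundaryFlux hk hkpos hε hα hβ
  have init_le : ρ 0 ≤ 1 := by
    have : 0 ≤ α * (1 - ρ 0) := hb.1 ▸ div_nonneg hJ (hkpos 0 (by simp)).le
    exact sub_nonneg.1 (nonneg_of_mul_nonneg_right this hα)
  have final_nonneg : 0 ≤ ρ 1 := by
    have : 0 ≤ β * ρ 1 := hb.2 ▸ div_nonneg hJ (hkpos 1 (by simp)).le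
    exact nonneg_of_mul_nonneg_right this hβ
  have hnonneg : ∀ x ∈ Icc (0 : ℝ) 1, 0 ≤ ρ x := by
    intro x hx
    by_contra! hneg
    have := hρ.le_of_truncated_of_nonpos hkpos hε hJ hx.1 hneg.le hx.2 le_rfl
    linarith
  exact ⟨J, ρ, hρ.congr_drift fun x hx ↦ truncatedLogistic_of_mem_Icc
    ⟨hnonneg x hx, hρ.le_one_of_truncated hkpos hε hJ init_le hx⟩, hb⟩

end Shooting

section ParameterRegions

variable {k : ℝ → ℝ} {ξs α β : ℝ}

lemma sqrt_one_sub_le_one {x : ℝ} (hx : 0 ≤ x) : √(1 - x) ≤ 1 :=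
  Real.sqrt_le_one.2 (by linarith)

lemma sqrt_one_sub_lt_one {x : ℝ} (hx : 0 < x) : √(1 - x) < 1 :=
  (Real.sqrt_lt' one_pos).2 (by linarith)

lemma rhoC0_pos (h0 : 0 < k 0) (hξs : 0 < k ξs) : 0 < rhoC0 k ξs := by
  unfold rhoC0
  linarith [sqrt_one_sub_lt_one (div_pos hξs h0)]

lemma rhoC0_le_half : rhoC0 k ξs ≤ 1 / 2 := by
  unfold rhoC0
  linarith [Real.sqrt_nonneg (1 - k ξs / k 0)]

lemma rhoC1_lt_one (h1 : 0 < k 1) (hξs : 0 < k ξs) : rhoC1 k ξs < 1 := by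
  unfold rhoC1
  linarith [sqrt_one_sub_lt_one (div_pos hξs h1)]

lemma half_le_rhoC1 : 1 / 2 ≤ rhoC1 k ξs := by
  unfold rhoC1
  linarith [Real.sqrt_nonneg (1 - k ξs / k 1)]

lemma rhoStar_nonneg (h0 : 0 ≤ k 0) (h1 : 0 ≤ k 1) (hα : 0 ≤ α) (hα' : α ≤ 1) :
    0 ≤ rhoStar k α := by
  have := sub_nonneg.2 hα'
  unfold rhoStar
  linarith [sqrt_one_sub_le_one (x := 4 * α * (1 - α) * k 0 / k 1) (by positivity)]

lemma rhoStar_le_half : rhoStar k α ≤ 1 / 2 := by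
  unfold rhoStar
  linarith [Real.sqrt_nonneg (1 - 4 * α * (1 - α) * k 0 / k 1)]

lemma half_le_rhoLowStar : 1 / 2 ≤ rhoLowStar k β := by
  unfold rhoLowStar
  linarith [Real.sqrt_nonneg (1 - 4 * β * (1 - β) * k 1 / k 0)]

lemma rhoLowStar_le_one (h0 : 0 ≤ k 0) (h1 : 0 ≤ k 1) (hβ : 0 ≤ β) (hβ' : β ≤ 1) :
    rhoLowStar k β ≤ 1 := by
  have := sub_nonneg.2 hβ'
  unfold rhoLowStar
  linarith [sqrt_one_sub_le_one (x := 4 * β * (1 - β) * k 1 / k 0) (by positivity)]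

/-- The pair `(α, β)` lies in one of the eight regions `G_1, …, G_8`, listed in this order. -/
def InPhaseRegion (k : ℝ → ℝ) (ξs α β : ℝ) : Prop :=
  (0 < α ∧ α < rhoC0 k ξs ∧ rhoStar k α < β ∧ β < 1 - rhoStar k α) ∨
  (0 < α ∧ α < rhoC0 k ξs ∧ 1 - rhoStar k α < β ∧ β < 1) ∨
  (rhoC0 k ξs < α ∧ α < 1 - rhoC0 k ξs ∧ 1 - rhoC1 k ξs < β ∧ β < rhoC1 k ξs) ∨
  (rhoC0 k ξs < α ∧ α < 1 - rhoC0 k ξs ∧ rhoC1 k ξs < β ∧ β < 1) ∨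
  (1 - rhoC0 k ξs < α ∧ α < 1 ∧ 1 - rhoC1 k ξs < β ∧ β < rhoC1 k ξs) ∨
  (1 - rhoC0 k ξs < α ∧ α < 1 ∧ rhoC1 k ξs < β ∧ β < 1) ∨
  (1 - rhoLowStar k β < α ∧ α < rhoLowStar k β ∧ 0 < β ∧ β < 1 - rhoC1 k ξs) ∨
  (rhoLowStar k β < α ∧ α < 1 ∧ 0 < β ∧ β < 1 - rhoC1 k ξs)

lemma InPhaseRegion.pos (h : InPhaseRegion k ξs α β) (h0 : 0 < k 0) (h1 : 0 < k 1)
    (hξs : 0 < k ξs) : 0 < α ∧ 0 < β := by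
  have hC0 := rhoC0_pos h0 hξs
  have hC0' := rhoC0_le_half (k := k) (ξs := ξs)
  have hC1 := rhoC1_lt_one h1 hξs
  have hC1' := half_le_rhoC1 (k := k) (ξs := ξs)
  have hS := rhoStar_le_half (k := k) (α := α)
  have hL := half_le_rhoLowStar (k := k) (β := β)
  rcases h with ⟨hα, hα', hβ, -⟩ | ⟨hα, -, hβ, -⟩ | ⟨hα, -, hβ, -⟩ | ⟨hα, -, hβ, -⟩ |
    ⟨hα, -, hβ, -⟩ | ⟨hα, -, hβ, -⟩ | ⟨hα, -, hβ, hβ'⟩ | ⟨hα, -, hβ, -⟩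
  · exact ⟨hα, (rhoStar_nonneg h0.le h1.le hα.le (by linarith)).trans_lt hβ⟩
  · exact ⟨hα, by linarith⟩
  · exact ⟨hC0.trans hα, by linarith⟩
  · exact ⟨hC0.trans hα, by linarith⟩
  · exact ⟨by linarith, by linarith⟩
  · exact ⟨by linarith, by linarith⟩
  · have := rhoLowStar_le_one h0.le h1.le hβ.le (by linarith)
    exact ⟨by linarith, hβ⟩
  · exact ⟨by linarith, hβ⟩

end ParameterRegions

theorem bvp_existence_uniqueness_general {k : ℝ → ℝ} {ε α β : ℝ}
    (hk : ContDiffOn ℝ 1 k (Icc 0 1)) (hkpos : ∀ x ∈ Icc (0 : ℝ) 1, 0 < k x)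
    (hε : 0 < ε) (hα : 0 < α) (hβ : 0 < β) :
    ∃ ρ : ℝ → ℝ, IsStatSol k ε α β ρ ∧
      ∀ σ : ℝ → ℝ, IsStatSol k ε α β σ → EqOn σ ρ (Icc 0 1) := by
  have hk0 : ∀ x ∈ Icc (0 : ℝ) 1, k x ≠ 0 := fun x hx ↦ (hkpos x hx).ne'
  simp only [isStatSol_iff_exists_isFluxSol hk hk0 hε.ne']
  obtain ⟨J, ρ, hρ, hρb⟩ := exists_isFluxSol_hasBoundaryFlux hk.continuousOn hkpos hε hα hβ
  refine ⟨ρ, ⟨J, hρ, hρb⟩, ?_⟩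
  rintro σ ⟨J', hσ, hσb⟩
  exact hσ.eqOn_of_hasBoundaryFlux hkpos hε hα hβ hσb hρ hρb

/-- For `(α,β)` in any of the eight open parameter regions `G_1,…,G_8`,
there is `ε₀ > 0` such that for all `0 < ε < ε₀` the stationary boundary value problem
has exactly one solution (unique as a function on `[0,1]`). -/
theorem bvp_existence_uniqueness
    (k : ℝ → ℝ) (ξs : ℝ)
    (hk : ContDiff ℝ 2 k)
    (hkpos : ∀ x ∈ Icc (0:ℝ) 1, 0 < k x)
    (hξs : ξs ∈ Ioo (0:ℝ) 1)
    (hmin : ∀ x ∈ Icc (0:ℝ) 1, x ≠ ξs → k ξs < k x)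
    (hk's : deriv k ξs = 0)
    (hk''s : 0 < deriv (deriv k) ξs)
    (α β : ℝ)
    (hreg :
      -- G_1
      (0 < α ∧ α < rhoC0 k ξs ∧ rhoStar k α < β ∧ β < 1 - rhoStar k α) ∨
      -- G_2
      (0 < α ∧ α < rhoC0 k ξs ∧ 1 - rhoStar k α < β ∧ β < 1) ∨
      -- G_3
      (rhoC0 k ξs < α ∧ α < 1 - rhoC0 k ξs ∧ 1 - rhoC1 k ξs < β ∧ β < rhoC1 k ξs) ∨
      -- G_4
      (rhoC0 k ξs < α ∧ α < 1 - rhoC0 k ξs ∧ rhoC1 k ξs < β ∧ β < 1) ∨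
      -- G_5
      (1 - rhoC0 k ξs < α ∧ α < 1 ∧ 1 - rhoC1 k ξs < β ∧ β < rhoC1 k ξs) ∨
      -- G_6
      (1 - rhoC0 k ξs < α ∧ α < 1 ∧ rhoC1 k ξs < β ∧ β < 1) ∨
      -- G_7
      (1 - rhoLowStar k β < α ∧ α < rhoLowStar k β ∧ 0 < β ∧ β < 1 - rhoC1 k ξs) ∨
      -- G_8
      (rhoLowStar k β < α ∧ α < 1 ∧ 0 < β ∧ β < 1 - rhoC1 k ξs)) :
    ∃ ε₀ > 0, ∀ ε : ℝ, 0 < ε → ε < ε₀ →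
      ∃ ρ : ℝ → ℝ, IsStatSol k ε α β ρ ∧
        ∀ σ : ℝ → ℝ, IsStatSol k ε α β σ → EqOn σ ρ (Icc (0:ℝ) 1) := by
  obtain ⟨hα, hβ⟩ := InPhaseRegion.pos hreg (hkpos 0 (by simp)) (hkpos 1 (by simp))
    (hkpos ξs (Ioo_subset_Icc_self hξs))
  exact ⟨1, one_pos, fun ε hε _ ↦ bvp_existence_uniqueness_general
    (hk.of_le one_le_two).contDiffOn hkpos hε hα hβ⟩
end

section
/- Let 0 < β < 1 − ρ_c^1 and 1 − ρ_*(β) < α < 1 with α ≠ ρ_*(β), where ρ_*(β) := (1/2)(1 + √(1 − 4β(1−β)k(1)/k(0))) (the high-density parameter regions G_7 and G_8). Then for every δ > 0 and every x ∈ (0,1) there exists ε_0 > 0 such that for every ε ∈ (0, ε_0) and every twice continuously differentiable ρ : [0,1] → ℝ solving the stationary boundary value problem one has |ρ(1) − (1 − β)| < δ, |ρ(x) − (1/2)(1 + √(1 − 4β(1−β)k(1)/k(x)))| < δ, and |ρ(0) − (1 − β(1−β)k(1)/(α k(0)))| < δ; i.e., as ε → 0 the solution converges to the high-density reduced orbit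 ending at ρ = 1 − β, with a boundary layer only at the entrance x = 0. -/
open Set

/-!
The equation says that the current `J = k j` is constant, so `ε ρ' = ρ (1 - ρ) - J / k`. As long as
`4 J < k`, the right-hand side has two roots `1/2 ± √(1 - 4 J / k) / 2`, of which the upper one is
attracting as `x` increases and the lower one repelling. Curves `1/2 + s(x) √(1 - 4 I / k)` with
`|s| < 1/2` (resp. `s > 1/2`) are, for small `ε`, strict lower barriers for all currents `J ≤ I`
(resp. upper barriers for all `J ≥ I`), and letting `s` move affinely between prescribed values
carries entrance data to the upper root at any given `x > 0`. At `x = 1` this forces the current: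
if `J ≤ I < β (1 - β) k(1)`, then `ρ(1)` is close to an upper root exceeding `1 - β`, so that
`J = β k(1) ρ(1) > I`, and similarly from above. With `J → β (1 - β) k(1)` known, the same
barriers give the profile.
-/

open Filter Topology

section Comparison

variable {f : ℝ → ℝ → ℝ} {w ρ ρ' : ℝ → ℝ} {a b : ℝ}

lemma eventually_forall_mul_lt {X : Type*} [TopologicalSpace X] {K : Set X} (hK : IsCompact K)
    {u g : X → ℝ} (hu : ContinuousOn u K) (hg : ContinuousOn g K) (hpos : ∀ y ∈ K, 0 < g y) :
    ∀ᶠ ε in 𝓝 (0 : ℝ), ∀ y ∈ K, ε * u y < g y := by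
  obtain ⟨C, hC⟩ := hK.exists_bound_of_continuousOn (hu.div hg fun y hy ↦ (hpos y hy).ne')
  have hsmall : ∀ᶠ ε in 𝓝 (0 : ℝ), |ε| * C < 1 :=
    (continuous_abs.mul continuous_const).tendsto' 0 0 (by simp) |>.eventually_lt_const one_pos
  filter_upwards [hsmall] with ε hε y hy
  rw [← div_lt_one (hpos y hy), mul_div_assoc]
  calc ε * (u y / g y) ≤ |ε| * ‖u y / g y‖ := (le_abs_self _).trans (abs_mul _ _).le
    _ ≤ |ε| * C := mul_le_mul_of_nonneg_left (hC y hy) (abs_nonneg ε)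
    _ < 1 := hε

lemma strictSubsolution_le_supersolution {w' : ℝ → ℝ} {ε : ℝ} (hε : 0 < ε)
    (hw : ∀ y ∈ Icc a b, HasDerivWithinAt w (w' y) (Icc a b) y)
    (hρ : ∀ y ∈ Icc a b, HasDerivWithinAt ρ (ρ' y) (Icc a b) y)
    (hsub : ∀ y ∈ Icc a b, ε * w' y < f y (w y))
    (hsup : ∀ y ∈ Icc a b, f y (ρ y) ≤ ε * ρ' y) (ha : w a ≤ ρ a) :
    ∀ y ∈ Icc a b, w y ≤ ρ y := by
  have right_deriv {u u' : ℝ → ℝ} (hu : ∀ y ∈ Icc a b, HasDerivWithinAt u (u' y) (Icc a b) y) :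
      ∀ y ∈ Ico a b, HasDerivWithinAt u (u' y) (Ici y) y := fun y hy ↦
    (hu y (Ico_subset_Icc_self hy)).mono_of_mem_nhdsWithin (Icc_mem_nhdsGE_of_mem hy)
  refine image_le_of_deriv_right_lt_deriv_boundary' (fun y hy ↦ (hw y hy).continuousWithinAt)
    (right_deriv hw) ha (fun y hy ↦ (hρ y hy).continuousWithinAt) (right_deriv hρ) ?_
  intro y hy hcontact
  have hy' := Ico_subset_Icc_self hy
  refine lt_of_mul_lt_mul_left ((hsub y hy').trans_le ?_) hε.le
  exact hcontact ▸ hsup y hy'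

lemma eventually_strictSubsolution_le (hab : a < b) (hw : ContDiffOn ℝ 1 w (Icc a b))
    (hf : ContinuousOn (fun y ↦ f y (w y)) (Icc a b)) (hpos : ∀ y ∈ Icc a b, 0 < f y (w y)) :
    ∀ᶠ ε in 𝓝[>] (0 : ℝ), ∀ ρ ρ' : ℝ → ℝ,
      (∀ y ∈ Icc a b, HasDerivWithinAt ρ (ρ' y) (Icc a b) y) →
      (∀ y ∈ Icc a b, f y (ρ y) ≤ ε * ρ' y) → w a ≤ ρ a → ∀ y ∈ Icc a b, w y ≤ ρ y := by
  have hw' := hw.continuousOn_derivWithin (uniqueDiffOn_Icc hab) le_rfl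
  filter_upwards [nhdsWithin_le_nhds (eventually_forall_mul_lt isCompact_Icc hw' hf hpos),
    self_mem_nhdsWithin] with ε hsub hε ρ ρ' hρ hsup ha
  exact strictSubsolution_le_supersolution hε
    (fun y hy ↦ (hw.differentiableOn one_ne_zero y hy).hasDerivWithinAt) hρ hsub hsup ha

lemma eventually_le_strictSupersolution (hab : a < b) (hw : ContDiffOn ℝ 1 w (Icc a b))
    (hf : ContinuousOn (fun y ↦ f y (w y)) (Icc a b)) (hneg : ∀ y ∈ Icc a b, f y (w y) < 0) :
    ∀ᶠ ε in 𝓝[>] (0 : ℝ), ∀ ρ ρ' : ℝ → ℝ,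
      (∀ y ∈ Icc a b, HasDerivWithinAt ρ (ρ' y) (Icc a b) y) →
      (∀ y ∈ Icc a b, ε * ρ' y ≤ f y (ρ y)) → ρ a ≤ w a → ∀ y ∈ Icc a b, ρ y ≤ w y := by
  have hreflected := eventually_strictSubsolution_le (f := fun y u ↦ -f y (-u)) hab hw.neg
    (by simpa only [neg_neg] using! hf.neg) (by simpa only [neg_neg, neg_pos] using hneg)
  filter_upwards [hreflected] with ε hε ρ ρ' hρ hsub ha y hy
  refine neg_le_neg_iff.1 (hε (-ρ) (-ρ') (fun z hz ↦ (hρ z hz).neg) (fun z hz ↦ ?_)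
    (neg_le_neg ha) y hy)
  simpa only [Pi.neg_apply, neg_neg, mul_neg, neg_le_neg_iff] using hsub z hz

end Comparison

section ReducedProblem

variable {k : ℝ → ℝ} {I J y : ℝ}

/-- The right-hand side of `ε ρ' = ρ (1 - ρ) - J / k`, the stationary equation integrated once,
where `J` is the constant value of `k j`. -/
noncomputable def drift (k : ℝ → ℝ) (J y u : ℝ) : ℝ := u * (1 - u) - J / k y

/-- The distance between the two roots of `drift k J y`, meaningful when `4 * J ≤ k y`. -/
noncomputable def rootGap (k : ℝ → ℝ) (J y : ℝ) : ℝ := Real.sqrt (1 - 4 * J / k y)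

/-- The larger root of `drift k J y`: the high-density reduced orbit with current `J`. The smaller
root is `1 - highRoot k J y`. -/
noncomputable def highRoot (k : ℝ → ℝ) (J y : ℝ) : ℝ := 1 / 2 * (1 + rootGap k J y)

/-- The current `J` stays below the local capacity `k / 4` on `[0,1]`, so that high- and low-density
orbits remain separated. -/
def Subcritical (k : ℝ → ℝ) (J : ℝ) : Prop := ∀ y ∈ Icc (0 : ℝ) 1, 4 * J < k y

lemma Subcritical.mono (hI : Subcritical k I) (hJI : J ≤ I) : Subcritical k J :=
  fun y hy ↦ (mul_le_mul_of_nonneg_left hJI zero_le_four).trans_lt (hI y hy)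

lemma Subcritical.eventually (hk : ContinuousOn k (Icc 0 1)) (hI : Subcritical k I) :
    ∀ᶠ J in 𝓝 I, Subcritical k J := by
  obtain ⟨m, hm, hmin⟩ := isCompact_Icc.exists_isMinOn (nonempty_Icc.2 zero_le_one) hk
  filter_upwards [(continuous_const_mul (4 : ℝ)).tendsto I |>.eventually_lt_const (hI m hm)]
    with J hJ y hy
  exact hJ.trans_le (hmin hy)

lemma discriminant_nonneg (hk : 0 < k y) (hJ : 4 * J ≤ k y) : 0 ≤ 1 - 4 * J / k y :=
  sub_nonneg.2 ((div_le_one hk).2 hJ)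

lemma discriminant_pos (hk : 0 < k y) (hJ : 4 * J < k y) : 0 < 1 - 4 * J / k y :=
  sub_pos.2 ((div_lt_one hk).2 hJ)

lemma rootGap_pos (hk : 0 < k y) (hJ : 4 * J < k y) : 0 < rootGap k J y :=
  Real.sqrt_pos.2 (discriminant_pos hk hJ)

lemma rootGap_sq (hk : 0 < k y) (hJ : 4 * J ≤ k y) : rootGap k J y ^ 2 = 1 - 4 * J / k y :=
  Real.sq_sqrt (discriminant_nonneg hk hJ)

lemma continuousOn_drift_comp {S : Set ℝ} {w : ℝ → ℝ} (hk : ContinuousOn k S)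
    (hk0 : ∀ y ∈ S, k y ≠ 0) (hw : ContinuousOn w S) :
    ContinuousOn (fun y ↦ drift k I y (w y)) S :=
  (hw.mul (continuousOn_const.sub hw)).sub
    (continuousOn_const.div hk hk0)

lemma drift_half_add_mul_rootGap (hk : 0 < k y) (hJ : 4 * J ≤ k y) (s : ℝ) :
    drift k J y (1 / 2 + s * rootGap k J y) = rootGap k J y ^ 2 * (1 / 4 - s ^ 2) := by
  unfold drift
  linear_combination (-1 / 4) * rootGap_sq hk hJ

lemma drift_le_drift (hk : 0 < k y) (hJI : J ≤ I) (u : ℝ) : drift k I y u ≤ drift k J y u :=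
  sub_le_sub_left (div_le_div_of_nonneg_right hJI hk.le) _

lemma highRoot_pos (k : ℝ → ℝ) (J y : ℝ) : 0 < highRoot k J y := by
  unfold highRoot rootGap
  positivity

lemma highRoot_mul_one_sub (hk : 0 < k y) (hJ : 4 * J ≤ k y) :
    highRoot k J y * (1 - highRoot k J y) = J / k y := by
  unfold highRoot
  linear_combination (-1 / 4) * rootGap_sq hk hJ

lemma highRoot_lt_one (hk : 0 < k y) (hJ : 0 < J) : highRoot k J y < 1 := by
  have hgap : rootGap k J y < 1 :=
    (Real.sqrt_lt' one_pos).2 (by linarith [show 0 < 4 * J / k y by positivity])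
  unfold highRoot
  linarith

lemma highRoot_lt_highRoot (hk : 0 < k y) (hI : 4 * I ≤ k y) (hJI : J < I) :
    highRoot k I y < highRoot k J y := by
  have hgap : rootGap k I y < rootGap k J y :=
    Real.sqrt_lt_sqrt (discriminant_nonneg hk hI) (by gcongr)
  unfold highRoot
  linarith

lemma continuous_highRoot_current (k : ℝ → ℝ) (y : ℝ) : Continuous fun J ↦ highRoot k J y := by
  unfold highRoot rootGap
  fun_prop

lemma contDiffOn_rootGap {S : Set ℝ} {n : WithTop ℕ∞} (hk : ContDiffOn ℝ n k S)
    (hkpos : ∀ y ∈ S, 0 < k y) (hJ : ∀ y ∈ S, 4 * J < k y) :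
    ContDiffOn ℝ n (rootGap k J) S :=
  (contDiffOn_const.sub (contDiffOn_const.div hk fun y hy ↦ (hkpos y hy).ne')).sqrt
    fun y hy ↦ (discriminant_pos (hkpos y hy) (hJ y hy)).ne'

lemma exists_mem_Ioo_half_add_mul_le {g c : ℝ} (hg : 0 < g) (hc : 1 / 2 * (1 - g) < c) :
    ∃ s ∈ Ioo (-1 / 2 : ℝ) (1 / 2), 1 / 2 + s * g ≤ c := by
  refine ⟨min 0 ((c - 1 / 2) / g), ⟨lt_min (by norm_num) ?_, ?_⟩, ?_⟩
  · rw [lt_div_iff₀ hg]; linarith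
  · exact (min_le_left _ _).trans_lt (by norm_num)
  · linarith [(le_div_iff₀ hg).1 (min_le_right 0 ((c - 1 / 2) / g))]

lemma exists_mem_Ioo_le_half_add_mul {g l : ℝ} (hg : 0 < g) (hl : l < 1 / 2 * (1 + g)) :
    ∃ s ∈ Ioo (-1 / 2 : ℝ) (1 / 2), l ≤ 1 / 2 + s * g := by
  obtain ⟨s, hs, hsl⟩ := exists_mem_Ioo_half_add_mul_le (c := 1 - l) hg (by linarith)
  exact ⟨-s, ⟨by linarith [hs.2], by linarith [hs.1]⟩, by linarith⟩

end ReducedProblem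

section Barrier

variable {k : ℝ → ℝ} {I X s₀ s₁ : ℝ}

/-- The curve `1/2 + s(y) * rootGap k I y` with `s` affine, `s 0 = s₀` and `s X = s₁`. The values
`s = ± 1/2` are the two roots of the drift. -/
noncomputable def barrier (k : ℝ → ℝ) (I X s₀ s₁ y : ℝ) : ℝ :=
  1 / 2 + AffineMap.lineMap s₀ s₁ (y / X) * rootGap k I y

lemma barrier_left (k : ℝ → ℝ) (I X s₀ s₁ : ℝ) :
    barrier k I X s₀ s₁ 0 = 1 / 2 + s₀ * rootGap k I 0 := by
  simp [barrier]

lemma barrier_right (hX : X ≠ 0) : barrier k I X s₀ s₁ X = 1 / 2 + s₁ * rootGap k I X := by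
  simp [barrier, hX]

lemma lineMap_div_mem {S : Set ℝ} (hS : Convex ℝ S) (h₀ : s₀ ∈ S) (h₁ : s₁ ∈ S) {y : ℝ}
    (hX : 0 < X) (hy : y ∈ Icc 0 X) : AffineMap.lineMap s₀ s₁ (y / X) ∈ S :=
  hS.lineMap_mem h₀ h₁ ⟨div_nonneg hy.1 hX.le, (div_le_one hX).2 hy.2⟩

lemma contDiffOn_barrier {S : Set ℝ} {n : WithTop ℕ∞} (hk : ContDiffOn ℝ n k S)
    (hkpos : ∀ y ∈ S, 0 < k y) (hI : ∀ y ∈ S, 4 * I < k y) :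
    ContDiffOn ℝ n (barrier k I X s₀ s₁) S := by
  have hline : ContDiff ℝ n fun y : ℝ ↦ AffineMap.lineMap s₀ s₁ (y / X) := by
    simp only [AffineMap.lineMap_apply, vsub_eq_sub, vadd_eq_add, smul_eq_mul]
    fun_prop
  exact contDiffOn_const.add (hline.contDiffOn.mul (contDiffOn_rootGap hk hkpos hI))

end Barrier

section Profile

variable {k : ℝ → ℝ} {I X s₀ s₁ : ℝ}

/-- `ρ` solves the integrated stationary equation `ε ρ' = ρ (1 - ρ) - J / k` on `[0,1]`. -/
def IsProfile (k : ℝ → ℝ) (ε J : ℝ) (ρ : ℝ → ℝ) : Prop :=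
  ∃ ρ' : ℝ → ℝ, ∀ y ∈ Icc (0 : ℝ) 1,
    HasDerivWithinAt ρ (ρ' y) (Icc 0 1) y ∧ ε * ρ' y = drift k J y (ρ y)

lemma eventually_barrier_le (hk : ContDiffOn ℝ 1 k (Icc 0 1)) (hkpos : ∀ y ∈ Icc (0 : ℝ) 1, 0 < k y)
    (hI : Subcritical k I) (hX : X ∈ Ioc (0 : ℝ) 1)
    (h₀ : s₀ ∈ Ioo (-1 / 2 : ℝ) (1 / 2)) (h₁ : s₁ ∈ Ioo (-1 / 2 : ℝ) (1 / 2)) :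
    ∀ᶠ ε in 𝓝[>] (0 : ℝ), ∀ ρ J, J ≤ I → IsProfile k ε J ρ →
      1 / 2 + s₀ * rootGap k I 0 ≤ ρ 0 → 1 / 2 + s₁ * rootGap k I X ≤ ρ X := by
  have hsub : Icc 0 X ⊆ Icc (0 : ℝ) 1 := Icc_subset_Icc_right hX.2
  have hw : ContDiffOn ℝ 1 (barrier k I X s₀ s₁) (Icc 0 X) :=
    (contDiffOn_barrier hk hkpos hI).mono hsub
  have hpos : ∀ y ∈ Icc 0 X, 0 < drift k I y (barrier k I X s₀ s₁ y) := fun y hy ↦ by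
    have hs := lineMap_div_mem (convex_Ioo _ _) h₀ h₁ hX.1 hy
    have hky := hkpos y (hsub hy)
    have hIy := hI y (hsub hy)
    rw [barrier, drift_half_add_mul_rootGap hky hIy.le]
    exact mul_pos (pow_pos (rootGap_pos hky hIy) 2) (by nlinarith [hs.1, hs.2])
  filter_upwards [eventually_strictSubsolution_le hX.1 hw (continuousOn_drift_comp
    (hk.continuousOn.mono hsub) (fun y hy ↦ (hkpos y (hsub hy)).ne') hw.continuousOn) hpos]
    with ε hε ρ J hJI ⟨ρ', hρ⟩ h0
  rw [← barrier_left k I X s₀ s₁] at h0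
  rw [← barrier_right hX.1.ne' (s₀ := s₀)]
  refine hε ρ ρ' (fun y hy ↦ (hρ y (hsub hy)).1.mono hsub) (fun y hy ↦ ?_) h0 X
    (right_mem_Icc.2 hX.1.le)
  exact (drift_le_drift (hkpos y (hsub hy)) hJI _).trans (hρ y (hsub hy)).2.ge

lemma eventually_le_barrier (hk : ContDiffOn ℝ 1 k (Icc 0 1)) (hkpos : ∀ y ∈ Icc (0 : ℝ) 1, 0 < k y)
    (hI : Subcritical k I) (hX : X ∈ Ioc (0 : ℝ) 1) (h₀ : 1 / 2 < s₀) (h₁ : 1 / 2 < s₁) :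
    ∀ᶠ ε in 𝓝[>] (0 : ℝ), ∀ ρ J, I ≤ J → IsProfile k ε J ρ →
      ρ 0 ≤ 1 / 2 + s₀ * rootGap k I 0 → ρ X ≤ 1 / 2 + s₁ * rootGap k I X := by
  have hsub : Icc 0 X ⊆ Icc (0 : ℝ) 1 := Icc_subset_Icc_right hX.2
  have hw : ContDiffOn ℝ 1 (barrier k I X s₀ s₁) (Icc 0 X) :=
    (contDiffOn_barrier hk hkpos hI).mono hsub
  have hneg : ∀ y ∈ Icc 0 X, drift k I y (barrier k I X s₀ s₁ y) < 0 := fun y hy ↦ by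
    have hs := mem_Ioi.1 (lineMap_div_mem (convex_Ioi _) h₀ h₁ hX.1 hy)
    have hky := hkpos y (hsub hy)
    have hIy := hI y (hsub hy)
    rw [barrier, drift_half_add_mul_rootGap hky hIy.le]
    exact mul_neg_of_pos_of_neg (pow_pos (rootGap_pos hky hIy) 2) (by nlinarith)
  filter_upwards [eventually_le_strictSupersolution hX.1 hw (continuousOn_drift_comp
    (hk.continuousOn.mono hsub) (fun y hy ↦ (hkpos y (hsub hy)).ne') hw.continuousOn) hneg]
    with ε hε ρ J hIJ ⟨ρ', hρ⟩ h0
  rw [← barrier_left k I X s₀ s₁] at h0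
  rw [← barrier_right hX.1.ne' (s₀ := s₀)]
  refine hε ρ ρ' (fun y hy ↦ (hρ y (hsub hy)).1.mono hsub) (fun y hy ↦ ?_) h0 X
    (right_mem_Icc.2 hX.1.le)
  exact (hρ y (hsub hy)).2.le.trans (drift_le_drift (hkpos y (hsub hy)) hIJ _)

lemma eventually_forall_profile_ge (hk : ContDiffOn ℝ 1 k (Icc 0 1))
    (hkpos : ∀ y ∈ Icc (0 : ℝ) 1, 0 < k y) (hI : Subcritical k I) (hX : X ∈ Ioc (0 : ℝ) 1)
    {c l : ℝ} (hc : 1 - highRoot k I 0 < c) (hl : l < highRoot k I X) :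
    ∀ᶠ ε in 𝓝[>] (0 : ℝ), ∀ ρ J, J ≤ I → IsProfile k ε J ρ → c ≤ ρ 0 → l ≤ ρ X := by
  have gap_pos : ∀ y ∈ Icc (0 : ℝ) 1, 0 < rootGap k I y := fun y hy ↦
    rootGap_pos (hkpos y hy) (hI y hy)
  have hc' : 1 / 2 * (1 - rootGap k I 0) < c := by
    unfold highRoot at hc
    linarith
  obtain ⟨s₀, hs₀, hs₀c⟩ :=
    exists_mem_Ioo_half_add_mul_le (gap_pos 0 (left_mem_Icc.2 zero_le_one)) hc'
  obtain ⟨s₁, hs₁, hs₁l⟩ := exists_mem_Ioo_le_half_add_mul (gap_pos X (Ioc_subset_Icc_self hX)) hl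
  filter_upwards [eventually_barrier_le hk hkpos hI hX hs₀ hs₁] with ε hε ρ J hJ hρ h0
  exact hs₁l.trans (hε ρ J hJ hρ (hs₀c.trans h0))

lemma eventually_forall_profile_le (hk : ContDiffOn ℝ 1 k (Icc 0 1))
    (hkpos : ∀ y ∈ Icc (0 : ℝ) 1, 0 < k y) (hI : Subcritical k I) (hX : X ∈ Ioc (0 : ℝ) 1)
    (c : ℝ) {u : ℝ} (hu : highRoot k I X < u) :
    ∀ᶠ ε in 𝓝[>] (0 : ℝ), ∀ ρ J, I ≤ J → IsProfile k ε J ρ → ρ 0 ≤ c → ρ X ≤ u := by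
  have gap_pos : ∀ y ∈ Icc (0 : ℝ) 1, 0 < rootGap k I y := fun y hy ↦
    rootGap_pos (hkpos y hy) (hI y hy)
  have gap₀ := gap_pos 0 (left_mem_Icc.2 zero_le_one)
  have gapX := gap_pos X (Ioc_subset_Icc_self hX)
  have hs₀ : 1 / 2 < max 1 ((c - 1 / 2) / rootGap k I 0) :=
    lt_max_of_lt_left (by norm_num)
  have hs₁ : 1 / 2 < (u - 1 / 2) / rootGap k I X := by
    unfold highRoot at hu
    rw [lt_div_iff₀ gapX]
    linarith
  filter_upwards [eventually_le_barrier hk hkpos hI hX hs₀ hs₁] with ε hε ρ J hJ hρ h0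
  have hc := (div_le_iff₀ gap₀).1 (le_max_right 1 ((c - 1 / 2) / rootGap k I 0))
  refine (hε ρ J hJ hρ (by linarith)).trans_eq ?_
  rw [div_mul_cancel₀ _ gapX.ne', add_sub_cancel]

end Profile

section StationarySolution

variable {k ρ : ℝ → ℝ} {ε α β : ℝ}

/-- The constant value of `k j` along a stationary solution, read off at the entrance. -/
noncomputable def current (k : ℝ → ℝ) (ε : ℝ) (ρ : ℝ → ℝ) : ℝ := k 0 * flux ε ρ 0

lemma IsStatSol.mul_flux_eq_current (hk : DifferentiableOn ℝ k (Icc 0 1))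
    (hρ : IsStatSol k ε α β ρ) : ∀ y ∈ Icc (0 : ℝ) 1, k y * flux ε ρ y = current k ε ρ := by
  obtain ⟨hρ2, hconst, -, -⟩ := hρ
  have hρ' : DifferentiableOn ℝ (derivWithin ρ (Icc 0 1)) (Icc 0 1) :=
    (hρ2.derivWithin (m := 1) (uniqueDiffOn_Icc one_pos) one_add_one_eq_two.le).differentiableOn
      one_ne_zero
  have hρd : DifferentiableOn ℝ ρ (Icc 0 1) := hρ2.differentiableOn two_ne_zero
  have hflux : DifferentiableOn ℝ (flux ε ρ) (Icc 0 1) :=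
    (hρ'.const_mul (-ε)).add (hρd.mul (hρd.const_sub 1))
  exact constant_of_derivWithin_zero (hk.mul hflux) fun y hy ↦ hconst y (Ico_subset_Icc_self hy)

lemma IsStatSol.isProfile (hk : DifferentiableOn ℝ k (Icc 0 1))
    (hkpos : ∀ y ∈ Icc (0 : ℝ) 1, 0 < k y) (hρ : IsStatSol k ε α β ρ) :
    IsProfile k ε (current k ε ρ) ρ := by
  refine ⟨derivWithin ρ (Icc 0 1), fun y hy ↦
    ⟨(hρ.1.differentiableOn two_ne_zero y hy).hasDerivWithinAt, ?_⟩⟩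
  have hky := (hkpos y hy).ne'
  rw [drift, ← hρ.mul_flux_eq_current hk y hy, mul_div_cancel_left₀ _ hky, flux]
  ring

lemma IsStatSol.entrance_eq (hα : α ≠ 0) (hk0 : k 0 ≠ 0) (hρ : IsStatSol k ε α β ρ) :
    ρ 0 = 1 - current k ε ρ / (α * k 0) := by
  rw [current, hρ.2.2.1]
  field_simp
  ring

lemma IsStatSol.current_eq_exit (hk : DifferentiableOn ℝ k (Icc 0 1)) (hρ : IsStatSol k ε α β ρ) :
    current k ε ρ = β * k 1 * ρ 1 := by
  rw [← hρ.mul_flux_eq_current hk 1 (right_mem_Icc.2 zero_le_one), hρ.2.2.2]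
  ring

/-- The filter of pairs `(ε, ρ)` with `ρ` a stationary solution for `ε` and `ε → 0⁺`. No existence
or uniqueness is assumed: a limit along it is a limit uniform over all solutions. -/
def vanishingViscosity (k : ℝ → ℝ) (α β : ℝ) : Filter (ℝ × (ℝ → ℝ)) :=
  comap Prod.fst (𝓝[>] 0) ⊓ 𝓟 {p | IsStatSol k p.1 α β p.2}

lemma eventually_vanishingViscosity {P : ℝ × (ℝ → ℝ) → Prop} :
    (∀ᶠ p in vanishingViscosity k α β, P p) ↔
      ∀ᶠ ε in 𝓝[>] 0, ∀ ρ, IsStatSol k ε α β ρ → P (ε, ρ) := by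
  simp only [vanishingViscosity, eventually_inf_principal, eventually_comap, mem_ofPred_eq,
    Prod.forall]
  refine eventually_congr (.of_forall fun ε ↦ ⟨fun h ρ ↦ h ε ρ rfl, ?_⟩)
  rintro h _ ρ rfl
  exact h ρ

lemma eventually_isStatSol (k : ℝ → ℝ) (α β : ℝ) :
    ∀ᶠ p in vanishingViscosity k α β, IsStatSol k p.1 α β p.2 :=
  mem_inf_of_right (mem_principal_self _)

end StationarySolution

section VanishingViscosity

variable {k : ℝ → ℝ} {α β I X : ℝ}

lemma eventually_ge_of_current_le (hk : ContDiffOn ℝ 1 k (Icc 0 1))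
    (hkpos : ∀ y ∈ Icc (0 : ℝ) 1, 0 < k y) (hα0 : 0 < α) (hI : Subcritical k I)
    (hα : 1 - highRoot k I 0 < α) (hX : X ∈ Ioc (0 : ℝ) 1) {l : ℝ} (hl : l < highRoot k I X) :
    ∀ᶠ p in vanishingViscosity k α β, current k p.1 p.2 ≤ I → l ≤ p.2 X := by
  have m0 : (0 : ℝ) ∈ Icc (0 : ℝ) 1 := left_mem_Icc.2 zero_le_one
  have hk0 := hkpos 0 m0
  have hentrance : 1 - highRoot k I 0 < 1 - I / (α * k 0) := by
    rw [sub_lt_sub_iff_left, mul_comm, ← div_div, div_lt_iff₀ hα0,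
      ← highRoot_mul_one_sub hk0 (hI 0 m0).le]
    exact mul_lt_mul_of_pos_left hα (highRoot_pos k I 0)
  rw [eventually_vanishingViscosity]
  filter_upwards [eventually_forall_profile_ge hk hkpos hI hX hentrance hl] with ε hε ρ hρ hJ
  refine hε ρ _ hJ (hρ.isProfile (hk.differentiableOn one_ne_zero) hkpos) ?_
  rw [hρ.entrance_eq hα0.ne' hk0.ne']
  gcongr

lemma eventually_le_of_le_current (hk : ContDiffOn ℝ 1 k (Icc 0 1))
    (hkpos : ∀ y ∈ Icc (0 : ℝ) 1, 0 < k y) (hα0 : 0 < α) (hI : Subcritical k I)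
    (hX : X ∈ Ioc (0 : ℝ) 1) {u : ℝ} (hu : highRoot k I X < u) :
    ∀ᶠ p in vanishingViscosity k α β, I ≤ current k p.1 p.2 → p.2 X ≤ u := by
  have hk0 := hkpos 0 (left_mem_Icc.2 zero_le_one)
  rw [eventually_vanishingViscosity]
  filter_upwards [eventually_forall_profile_le hk hkpos hI hX (1 - I / (α * k 0)) hu]
    with ε hε ρ hρ hJ
  refine hε ρ _ hJ (hρ.isProfile (hk.differentiableOn one_ne_zero) hkpos) ?_
  rw [hρ.entrance_eq hα0.ne' hk0.ne']
  gcongr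

/-- The current carried by the reduced orbit that ends at `ρ = 1 - β`. -/
def exitCurrent (k : ℝ → ℝ) (β : ℝ) : ℝ := β * (1 - β) * k 1

lemma highRoot_exitCurrent_one (hk1 : 0 < k 1) (hβ : β ≤ 1 / 2) :
    highRoot k (exitCurrent k β) 1 = 1 - β := by
  have hdisc : 1 - 4 * exitCurrent k β / k 1 = (1 - 2 * β) ^ 2 := by
    unfold exitCurrent
    field_simp
    ring
  rw [highRoot, rootGap, hdisc, Real.sqrt_sq (by linarith)]
  ring

lemma highRoot_exitCurrent_eq (k : ℝ → ℝ) (β y : ℝ) :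
    highRoot k (exitCurrent k β) y =
      1 / 2 * (1 + Real.sqrt (1 - 4 * β * (1 - β) * k 1 / k y)) := by
  simp only [highRoot, rootGap, exitCurrent, mul_assoc]

lemma tendsto_current (hk : ContDiffOn ℝ 1 k (Icc 0 1)) (hkpos : ∀ y ∈ Icc (0 : ℝ) 1, 0 < k y)
    (hβ0 : 0 < β) (hβ : β ≤ 1 / 2) (hsub : Subcritical k (exitCurrent k β)) (hα0 : 0 < α)
    (hα : 1 - highRoot k (exitCurrent k β) 0 < α) :
    Tendsto (fun p ↦ current k p.1 p.2) (vanishingViscosity k α β) (𝓝 (exitCurrent k β)) := by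
  have m0 : (0 : ℝ) ∈ Icc (0 : ℝ) 1 := left_mem_Icc.2 zero_le_one
  have m1 : (1 : ℝ) ∈ Icc (0 : ℝ) 1 := right_mem_Icc.2 zero_le_one
  have m1' : (1 : ℝ) ∈ Ioc (0 : ℝ) 1 := right_mem_Ioc.2 one_pos
  have hβk : 0 < β * k 1 := mul_pos hβ0 (hkpos 1 m1)
  have hexit : β * k 1 * (1 - β) = exitCurrent k β := mul_right_comm _ _ _
  have hroot := highRoot_exitCurrent_one (hkpos 1 m1) hβ
  refine tendsto_order.2 ⟨fun I hI ↦ ?_, fun I hI ↦ ?_⟩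
  · have hα' := highRoot_lt_highRoot (hkpos 0 m0) (hsub 0 m0).le hI
    have hrootI : 1 - β < highRoot k I 1 :=
      hroot ▸ highRoot_lt_highRoot (hkpos 1 m1) (hsub 1 m1).le hI
    filter_upwards [eventually_ge_of_current_le hk hkpos hα0 (hsub.mono hI.le) (by linarith)
      m1' hrootI, eventually_isStatSol k α β] with p hp hρ
    by_contra! hle
    have hflux := mul_le_mul_of_nonneg_left (hp hle) hβk.le
    rw [hexit, ← hρ.current_eq_exit (hk.differentiableOn one_ne_zero)] at hflux
    exact (hflux.trans hle).not_gt hI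
  · obtain ⟨I', hI', hlt, hltI⟩ := ((eventually_nhdsWithin_of_eventually_nhds
      (hsub.eventually hk.continuousOn)).and (Ioo_mem_nhdsGT hI)).exists
    have hrootI : highRoot k I' 1 < 1 - β :=
      hroot ▸ highRoot_lt_highRoot (hkpos 1 m1) (hI' 1 m1).le hlt
    filter_upwards [eventually_le_of_le_current hk hkpos hα0 hI' m1' hrootI,
      eventually_isStatSol k α β] with p hp hρ
    by_contra! hge
    have hflux := mul_le_mul_of_nonneg_left (hp (hltI.le.trans hge)) hβk.le
    rw [hexit, ← hρ.current_eq_exit (hk.differentiableOn one_ne_zero)] at hflux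
    exact ((hltI.le.trans hge).trans hflux).not_gt hlt

lemma tendsto_profile (hk : ContDiffOn ℝ 1 k (Icc 0 1)) (hkpos : ∀ y ∈ Icc (0 : ℝ) 1, 0 < k y)
    (hα0 : 0 < α) (hI : Subcritical k I) (hα : 1 - highRoot k I 0 < α)
    (hJ : Tendsto (fun p ↦ current k p.1 p.2) (vanishingViscosity k α β) (𝓝 I))
    (hX : X ∈ Ioc (0 : ℝ) 1) :
    Tendsto (fun p ↦ p.2 X) (vanishingViscosity k α β) (𝓝 (highRoot k I X)) := by
  have root_tendsto (y : ℝ) := (continuous_highRoot_current k y).tendsto I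
  refine tendsto_order.2 ⟨fun l hl ↦ ?_, fun u hu ↦ ?_⟩
  · obtain ⟨m, hlm, hm⟩ := exists_between hl
    have hnear : ∀ᶠ I' in 𝓝 I, Subcritical k I' ∧ 1 - α < highRoot k I' 0 ∧ m < highRoot k I' X :=
      (hI.eventually hk.continuousOn).and <|
        ((root_tendsto 0).eventually_const_lt (by linarith)).and
          ((root_tendsto X).eventually_const_lt hm)
    obtain ⟨I', ⟨hI', hα', hm'⟩, hlt⟩ := ((eventually_nhdsWithin_of_eventually_nhds hnear).and
      (self_mem_nhdsWithin (s := Ioi I))).exists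
    filter_upwards [hJ.eventually_lt_const hlt,
      eventually_ge_of_current_le hk hkpos hα0 hI' (by linarith) hX hm'] with p hpJ hp
    exact hlm.trans_le (hp hpJ.le)
  · obtain ⟨m, hm, hmu⟩ := exists_between hu
    obtain ⟨I', hm', hlt⟩ := ((eventually_nhdsWithin_of_eventually_nhds
      ((root_tendsto X).eventually_lt_const hm)).and (self_mem_nhdsWithin (s := Iio I))).exists
    filter_upwards [hJ.eventually_const_lt hlt,
      eventually_le_of_le_current hk hkpos hα0 (hI.mono (le_of_lt hlt)) hX hm'] with p hpJ hp
    exact (hp hpJ.le).trans_lt hmu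

lemma tendsto_entrance (hk0 : 0 < k 0) (hα0 : 0 < α)
    (hJ : Tendsto (fun p ↦ current k p.1 p.2) (vanishingViscosity k α β) (𝓝 I)) :
    Tendsto (fun p ↦ p.2 0) (vanishingViscosity k α β) (𝓝 (1 - I / (α * k 0))) :=
  ((hJ.div_const (α * k 0)).const_sub 1).congr' <|
    (eventually_isStatSol k α β).mono fun _ hρ ↦ (hρ.entrance_eq hα0.ne' hk0.ne').symm

end VanishingViscosity

section Capacity

variable {k : ℝ → ℝ} {β ξ : ℝ}

lemma lt_half_of_lt_one_sub_rhoC1 (hβ : β < 1 - rhoC1 k ξ) : β < 1 / 2 := by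
  unfold rhoC1 at hβ
  linarith [Real.sqrt_nonneg (1 - k ξ / k 1)]

lemma four_mul_exitCurrent_lt (hk1 : 0 < k 1) (hβ : β < 1 - rhoC1 k ξ) :
    4 * exitCurrent k β < k ξ := by
  have hβ' := lt_half_of_lt_one_sub_rhoC1 hβ
  have hsq : 1 - k ξ / k 1 < (1 - 2 * β) ^ 2 := by
    refine (Real.sqrt_lt' (by linarith)).1 ?_
    unfold rhoC1 at hβ
    linarith
  have hratio : 4 * (β * (1 - β)) < k ξ / k 1 := by linarith
  rw [lt_div_iff₀ hk1] at hratio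
  rwa [exitCurrent, ← mul_assoc]

lemma subcritical_exitCurrent (hk1 : 0 < k 1) (hmin : IsMinOn k (Icc 0 1) ξ)
    (hβ : β < 1 - rhoC1 k ξ) : Subcritical k (exitCurrent k β) :=
  fun _ hy ↦ (four_mul_exitCurrent_lt hk1 hβ).trans_le (hmin hy)

end Capacity

theorem bvp_high_density_profile_general {k : ℝ → ℝ} {α β : ℝ}
    (hk : ContDiffOn ℝ 1 k (Icc 0 1)) (hkpos : ∀ y ∈ Icc (0 : ℝ) 1, 0 < k y)
    (hβ0 : 0 < β) (hβ : β ≤ 1 / 2) (hsub : Subcritical k (exitCurrent k β))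
    (hα : 1 - rhoLowStar k β < α) :
    ∀ δ > 0, ∀ x ∈ Ioc (0 : ℝ) 1, ∃ ε₀ > 0, ∀ ε : ℝ, 0 < ε → ε < ε₀ →
      ∀ ρ : ℝ → ℝ, IsStatSol k ε α β ρ →
        |ρ 1 - (1 - β)| < δ ∧
        |ρ x - 1 / 2 * (1 + Real.sqrt (1 - 4 * β * (1 - β) * k 1 / k x))| < δ ∧
        |ρ 0 - (1 - β * (1 - β) * k 1 / (α * k 0))| < δ := by
  intro δ hδ x hx
  have hk0 := hkpos 0 (left_mem_Icc.2 zero_le_one)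
  have hk1 := hkpos 1 (right_mem_Icc.2 zero_le_one)
  have hexit : 0 < exitCurrent k β := mul_pos (mul_pos hβ0 (by linarith)) hk1
  rw [rhoLowStar, ← highRoot_exitCurrent_eq] at hα
  have hα0 : 0 < α := (sub_pos.2 (highRoot_lt_one hk0 hexit)).trans hα
  have hJ := tendsto_current hk hkpos hβ0 hβ hsub hα0 hα
  have hprofile {X : ℝ} (hX : X ∈ Ioc (0 : ℝ) 1) := tendsto_profile hk hkpos hα0 hsub hα hJ hX
  have h1 := hprofile (right_mem_Ioc.2 one_pos)
  have hx' := hprofile hx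
  rw [highRoot_exitCurrent_one hk1 hβ] at h1
  rw [highRoot_exitCurrent_eq] at hx'
  have hclose := (Metric.tendsto_nhds.1 h1 δ hδ).and <|
    (Metric.tendsto_nhds.1 hx' δ hδ).and (Metric.tendsto_nhds.1 (tendsto_entrance hk0 hα0 hJ) δ hδ)
  obtain ⟨ε₀, hε₀, h⟩ :=
    (nhdsGT_basis (0 : ℝ)).eventually_iff.1 (eventually_vanishingViscosity.1 hclose)
  exact ⟨ε₀, hε₀, fun ε hε hεlt ↦ h ⟨hε, hεlt⟩⟩

/-- In the high-density regions `G_7 ∪ G_8`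
(`0 < β < 1 - ρ_c^1`, `1 - ρ_*(β) < α < 1`, `α ≠ ρ_*(β)`), as `ε → 0` the solutions of the
stationary boundary value problem converge to the high-density reduced orbit ending at
`ρ = 1 - β`: `ρ(1) → 1 - β`, `ρ(x) → (1/2)(1 + √(1 - 4β(1-β)k(1)/k(x)))` at interior
points `x`, and `ρ(0) → 1 - β(1-β)k(1)/(αk(0))` (boundary layer only at the entrance). -/
theorem bvp_high_density_profile
    (k : ℝ → ℝ) (ξs : ℝ)
    (hk : ContDiff ℝ 2 k)
    (hkpos : ∀ x ∈ Icc (0:ℝ) 1, 0 < k x)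
    (hξs : ξs ∈ Ioo (0:ℝ) 1)
    (hmin : ∀ x ∈ Icc (0:ℝ) 1, x ≠ ξs → k ξs < k x)
    (hk's : deriv k ξs = 0)
    (hk''s : 0 < deriv (deriv k) ξs)
    (α β : ℝ)
    (hβ0 : 0 < β) (hβ : β < 1 - rhoC1 k ξs)
    (hα1 : 1 - rhoLowStar k β < α) (hα2 : α < 1) (hα3 : α ≠ rhoLowStar k β) :
    ∀ δ > 0, ∀ x ∈ Ioo (0:ℝ) 1, ∃ ε₀ > 0, ∀ ε : ℝ, 0 < ε → ε < ε₀ →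
      ∀ ρ : ℝ → ℝ, IsStatSol k ε α β ρ →
        |ρ 1 - (1 - β)| < δ ∧
        |ρ x - 1/2 * (1 + Real.sqrt (1 - 4*β*(1-β) * k 1 / k x))| < δ ∧
        |ρ 0 - (1 - β*(1-β) * k 1 / (α * k 0))| < δ := by
  have hmin' : IsMinOn k (Icc 0 1) ξs := isMinOn_iff.2 fun y hy ↦
    (eq_or_ne y ξs).elim (fun h ↦ (congrArg k h.symm).le) fun h ↦ (hmin y hy h).le
  exact fun δ hδ x hx ↦ bvp_high_density_profile_general (hk.of_le one_le_two).contDiffOn hkpos hβ0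
    (lt_half_of_lt_one_sub_rhoC1 hβ).le
    (subcritical_exitCurrent (hkpos 1 (right_mem_Icc.2 zero_le_one)) hmin' hβ) hα1 δ hδ x
    (Ioo_subset_Ioc_self hx)
end
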